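/- Let ν_k be an adversary policy, let μ_k ∈ argmax_μ v^{μ,ν_k}, let ν' ∈ argmin_ν T̄^ν v^{μ_k,ν_k}, and let η ∈ (0,1]. Then v^{μ_k,ν_k} ≥ T̄^{(1−η)ν_k + ην'} v^{μ_k,ν_k} componentwise, where (1−η)ν_k + ην' denotes the statewise convex mixture of the measures ν_k(s) and ν'(s). -/

import Mathlib

/-!
Write `v = v^{μ_k,ν_k}`. The value of a policy pair is a fixed point of its Bellman operator
(`Tpol_vVal`). Optimality of `μ_k` against `ν_k` forces `T^{μ,ν_k} v ≤ v` for every `μ`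
(`Tpol_le_of_optimal`): if this failed at a state `s`, switching `μ_k` to `μ` at `s` alone would
give a policy `μ̃` with `T^{μ̃,ν_k} v ≥ v`, strict at `s`; by the minimum principle for
`d ≥ γ P d` with `P` stochastic, its value would be at least `v`, hence equal to `v` by optimality,
contradicting strictness at `s`. Therefore `T̄^{ν'} v ≤ T̄^{ν_k} v ≤ v` by the choice of `ν'`.
Finally `T^{μ,ν} v` is affine in `ν`, so the mixture satisfies
`T^{μ,mix} v = (1-η) T^{μ,ν_k} v + η T^{μ,ν'} v ≤ v` for every `μ`.
-/

open MeasureTheory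

/-- Expected one-step reward `r^{μ,ν}(s) = ∫_A ∫_B r(s,a,b) dν(s)(b) dμ(s)(a)`. -/
noncomputable def rPol {S A B : Type*} [MeasurableSpace A] [MeasurableSpace B]
    (r : S → A → B → ℝ)
    (μ : S → ProbabilityMeasure A) (ν : S → ProbabilityMeasure B) (s : S) : ℝ :=
  ∫ a, ∫ b, r s a b ∂(ν s : Measure B) ∂(μ s : Measure A)

/-- Induced stochastic matrix `P^{μ,ν}(s,s') = ∫_A ∫_B P(s'|s,a,b) dν(s)(b) dμ(s)(a)`. -/
noncomputable def Pmat {S A B : Type*} [Fintype S] [MeasurableSpace A] [MeasurableSpace B]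
    (P : S → S → A → B → ℝ)
    (μ : S → ProbabilityMeasure A) (ν : S → ProbabilityMeasure B) : Matrix S S ℝ :=
  Matrix.of fun s s' => ∫ a, ∫ b, P s s' a b ∂(ν s : Measure B) ∂(μ s : Measure A)

/-- Fixed-policy Bellman operator `T^{μ,ν} v = r^{μ,ν} + γ P^{μ,ν} v`. -/
noncomputable def Tpol {S A B : Type*} [Fintype S] [MeasurableSpace A] [MeasurableSpace B]
    (γ : ℝ) (r : S → A → B → ℝ) (P : S → S → A → B → ℝ)
    (μ : S → ProbabilityMeasure A) (ν : S → ProbabilityMeasure B)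
    (v : S → ℝ) : S → ℝ :=
  fun s => rPol r μ ν s + γ * (Pmat P μ ν).mulVec v s

/-- Value of the pair of stationary policies: `v^{μ,ν} = Σ_{t≥0} γ^t (P^{μ,ν})^t r^{μ,ν}`. -/
noncomputable def vVal {S A B : Type*} [Fintype S] [DecidableEq S]
    [MeasurableSpace A] [MeasurableSpace B]
    (γ : ℝ) (r : S → A → B → ℝ) (P : S → S → A → B → ℝ)
    (μ : S → ProbabilityMeasure A) (ν : S → ProbabilityMeasure B) : S → ℝ :=
  ∑' t : ℕ, γ ^ t • ((Pmat P μ ν ^ t).mulVec (rPol r μ ν))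

section Integrals

variable {A B : Type*} [MetricSpace A] [CompactSpace A] [MeasurableSpace A] [BorelSpace A]
    [MetricSpace B] [CompactSpace B] [MeasurableSpace B] [BorelSpace B]

lemma integrable_slice {f : A → B → ℝ} (hf : Continuous fun p : A × B => f p.1 p.2)
    (ν : Measure B) [IsFiniteMeasure ν] (a : A) : Integrable (f a) ν := by
  have h : Continuous (f a) := hf.comp (Continuous.prodMk_right a)
  exact h.integrable_of_hasCompactSupport (HasCompactSupport.of_compactSpace _)

lemma integrable_inner {f : A → B → ℝ} (hf : Continuous fun p : A × B => f p.1 p.2)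
    (μ : Measure A) [IsFiniteMeasure μ] (ν : Measure B) [IsFiniteMeasure ν] :
    Integrable (fun a => ∫ b, f a b ∂ν) μ := by
  have h : Continuous fun a => ∫ b, f a b ∂ν := by
    have := continuous_parametric_integral_of_continuous (μ := ν) (f := f) hf
      (s := Set.univ) isCompact_univ
    simpa using this
  exact h.integrable_of_hasCompactSupport (HasCompactSupport.of_compactSpace _)

/-- The iterated integral is affine in the inner measure. -/
lemma integral_mix {f : A → B → ℝ} (hf : Continuous fun p : A × B => f p.1 p.2)
    (μ : Measure A) [IsFiniteMeasure μ] (ν₁ ν₂ : Measure B) [IsFiniteMeasure ν₁]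
    [IsFiniteMeasure ν₂] {c d : ℝ} (hc : 0 ≤ c) (hd : 0 ≤ d) :
    ∫ a, ∫ b, f a b ∂(ENNReal.ofReal c • ν₁ + ENNReal.ofReal d • ν₂) ∂μ
      = c * (∫ a, ∫ b, f a b ∂ν₁ ∂μ) + d * ∫ a, ∫ b, f a b ∂ν₂ ∂μ := by
  have h : ∀ a, ∫ b, f a b ∂(ENNReal.ofReal c • ν₁ + ENNReal.ofReal d • ν₂)
      = c * (∫ b, f a b ∂ν₁) + d * ∫ b, f a b ∂ν₂ := by
    intro a
    rw [integral_add_measure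
      ((integrable_slice hf ν₁ a).smul_measure ENNReal.ofReal_ne_top)
      ((integrable_slice hf ν₂ a).smul_measure ENNReal.ofReal_ne_top),
      integral_smul_measure, integral_smul_measure, ENNReal.toReal_ofReal hc,
      ENNReal.toReal_ofReal hd, smul_eq_mul, smul_eq_mul]
  simp_rw [h]
  rw [integral_add ((integrable_inner hf μ ν₁).const_mul c)
    ((integrable_inner hf μ ν₂).const_mul d), integral_const_mul, integral_const_mul]

lemma exists_abs_integral_le {f : A → B → ℝ} (hf : Continuous fun p : A × B => f p.1 p.2) :
    ∃ C : ℝ, ∀ (μ : ProbabilityMeasure A) (ν : ProbabilityMeasure B),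
      |∫ a, ∫ b, f a b ∂(ν : Measure B) ∂(μ : Measure A)| ≤ C := by
  obtain ⟨C, hC⟩ := isCompact_univ.exists_bound_of_continuousOn hf.continuousOn
  refine ⟨C, fun μ ν => ?_⟩
  have h1 : ∀ a, ‖∫ b, f a b ∂(ν : Measure B)‖ ≤ C := fun a => by
    simpa using norm_integral_le_of_norm_le_const (μ := (ν : Measure B)) (f := f a)
      (Filter.Eventually.of_forall fun b => hC (a, b) (Set.mem_univ _))
  simpa using norm_integral_le_of_norm_le_const (μ := (μ : Measure A))
    (Filter.Eventually.of_forall h1)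

end Integrals

section Stochastic

variable {S : Type*} [Fintype S]

lemma mulVec_abs_le {M : Matrix S S ℝ} (h0 : ∀ s s', 0 ≤ M s s') (h1 : ∀ s, ∑ s', M s s' = 1)
    {x : S → ℝ} {C : ℝ} (hx : ∀ s, |x s| ≤ C) (s : S) : |M.mulVec x s| ≤ C := by
  calc |M.mulVec x s| ≤ ∑ s', |M s s' * x s'| := Finset.abs_sum_le_sum_abs _ _
    _ ≤ ∑ s', M s s' * C := by
        refine Finset.sum_le_sum fun s' _ => ?_
        rw [abs_mul, abs_of_nonneg (h0 s s')]
        exact mul_le_mul_of_nonneg_left (hx s') (h0 s s')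
    _ = C := by rw [← Finset.sum_mul, h1, one_mul]

/-- The discounted Neumann series solves `w = x + γ M w`. -/
lemma neumann_fixed [DecidableEq S] {M : Matrix S S ℝ} (h0 : ∀ s s', 0 ≤ M s s')
    (h1 : ∀ s, ∑ s', M s s' = 1) {γ : ℝ} (hγ : γ ∈ Set.Ioo (0:ℝ) 1) (x : S → ℝ) :
    ∑' t : ℕ, γ ^ t • ((M ^ t).mulVec x)
      = x + γ • M.mulVec (∑' t : ℕ, γ ^ t • ((M ^ t).mulVec x)) := by
  have hb : ∀ (t : ℕ) (s : S), |(M ^ t).mulVec x s| ≤ ‖x‖ := by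
    intro t
    induction t with
    | zero => intro s; simpa using norm_le_pi_norm x s
    | succ t ih =>
      intro s
      rw [pow_succ', ← Matrix.mulVec_mulVec]
      exact mulVec_abs_le h0 h1 ih s
  have hs : Summable fun t : ℕ => γ ^ t • ((M ^ t).mulVec x) := by
    refine Summable.of_norm_bounded
      ((summable_geometric_of_lt_one hγ.1.le hγ.2).mul_right ‖x‖) fun t => ?_
    rw [norm_smul, norm_pow, Real.norm_of_nonneg hγ.1.le]
    exact mul_le_mul_of_nonneg_left
      ((pi_norm_le_iff_of_nonneg (norm_nonneg x)).2 (hb t)) (pow_nonneg hγ.1.le t)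
  have hmap : M.mulVec (∑' t : ℕ, γ ^ t • ((M ^ t).mulVec x))
      = ∑' t : ℕ, M.mulVec (γ ^ t • ((M ^ t).mulVec x)) :=
    (LinearMap.toContinuousLinearMap M.mulVecLin).map_tsum hs
  have hs' : Summable fun t : ℕ => M.mulVec (γ ^ t • ((M ^ t).mulVec x)) :=
    (LinearMap.toContinuousLinearMap M.mulVecLin).summable hs
  rw [hmap, ← hs'.tsum_const_smul, hs.tsum_eq_zero_add]
  congr 1
  · simp
  · refine tsum_congr fun t => ?_
    rw [Matrix.mulVec_smul, Matrix.mulVec_mulVec, ← pow_succ', smul_smul, ← pow_succ']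

/-- Minimum principle: look at a state where `d` is smallest. -/
lemma nonneg_of_ge_discounted {M : Matrix S S ℝ} (h0 : ∀ s s', 0 ≤ M s s')
    (h1 : ∀ s, ∑ s', M s s' = 1) {γ : ℝ} (hγ : γ ∈ Set.Ioo (0:ℝ) 1) {d : S → ℝ}
    (hd : ∀ s, γ * M.mulVec d s ≤ d s) (s : S) : 0 ≤ d s := by
  haveI : Nonempty S := ⟨s⟩
  obtain ⟨m, hm⟩ := Finite.exists_min d
  have h2 : d m ≤ M.mulVec d m := by
    calc d m = ∑ s', M m s' * d m := by rw [← Finset.sum_mul, h1, one_mul]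
      _ ≤ ∑ s', M m s' * d s' :=
        Finset.sum_le_sum fun s' _ => mul_le_mul_of_nonneg_left (hm s') (h0 m s')
  have h3 := (mul_le_mul_of_nonneg_left h2 hγ.1.le).trans (hd m)
  have h4 : 0 ≤ d m := by nlinarith [hγ.2]
  exact h4.trans (hm s)

end Stochastic

section Game

variable {S A B : Type*} [Fintype S]
    [MetricSpace A] [CompactSpace A] [MeasurableSpace A] [BorelSpace A]
    [MetricSpace B] [CompactSpace B] [MeasurableSpace B] [BorelSpace B]
    {γ : ℝ} {r : S → A → B → ℝ} {P : S → S → A → B → ℝ}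

lemma Pmat_nonneg (hP0 : ∀ s s' a b, 0 ≤ P s s' a b)
    (μ : S → ProbabilityMeasure A) (ν : S → ProbabilityMeasure B) (s s' : S) :
    0 ≤ Pmat P μ ν s s' :=
  integral_nonneg fun a => integral_nonneg fun b => hP0 s s' a b

lemma Pmat_sum (hPcont : ∀ s s', Continuous fun p : A × B => P s s' p.1 p.2)
    (hPsum : ∀ s a b, ∑ s', P s s' a b = 1)
    (μ : S → ProbabilityMeasure A) (ν : S → ProbabilityMeasure B) (s : S) :
    ∑ s', Pmat P μ ν s s' = 1 := by
  simp only [Pmat, Matrix.of_apply]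
  rw [← integral_finsetSum _ fun s' _ => integrable_inner (hPcont s s') _ _]
  have h : ∀ a, ∑ s', ∫ b, P s s' a b ∂(ν s : Measure B) = 1 := fun a => by
    rw [← integral_finsetSum _ fun s' _ => integrable_slice (hPcont s s') _ a]
    simp [hPsum]
  simp [h]

lemma Tpol_vVal [DecidableEq S] (hγ : γ ∈ Set.Ioo (0:ℝ) 1)
    (hPcont : ∀ s s', Continuous fun p : A × B => P s s' p.1 p.2)
    (hP0 : ∀ s s' a b, 0 ≤ P s s' a b) (hPsum : ∀ s a b, ∑ s', P s s' a b = 1)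
    (μ : S → ProbabilityMeasure A) (ν : S → ProbabilityMeasure B) (s : S) :
    Tpol γ r P μ ν (vVal γ r P μ ν) s = vVal γ r P μ ν s :=
  (congrFun (neumann_fixed (Pmat_nonneg hP0 μ ν) (Pmat_sum hPcont hPsum μ ν) hγ
    (rPol r μ ν)) s).symm

/-- The Bellman operator at `s` only sees the first player's policy at `s`. -/
lemma Tpol_congr {μ μ' : S → ProbabilityMeasure A} (ν : S → ProbabilityMeasure B) (v : S → ℝ)
    {s : S} (h : μ s = μ' s) : Tpol γ r P μ ν v s = Tpol γ r P μ' ν v s := by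
  simp only [Tpol, rPol, Pmat, Matrix.mulVec, dotProduct, Matrix.of_apply, h]

/-- One-shot deviations from an optimal response do not improve on its value. -/
lemma Tpol_le_of_optimal [DecidableEq S] (hγ : γ ∈ Set.Ioo (0:ℝ) 1)
    (hPcont : ∀ s s', Continuous fun p : A × B => P s s' p.1 p.2)
    (hP0 : ∀ s s' a b, 0 ≤ P s s' a b) (hPsum : ∀ s a b, ∑ s', P s s' a b = 1)
    {μk : S → ProbabilityMeasure A} {νk : S → ProbabilityMeasure B}
    (hμk : ∀ (μ : S → ProbabilityMeasure A) (s : S), vVal γ r P μ νk s ≤ vVal γ r P μk νk s)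
    (μ : S → ProbabilityMeasure A) (s : S) :
    Tpol γ r P μ νk (vVal γ r P μk νk) s ≤ vVal γ r P μk νk s := by
  by_contra! hlt
  have hfix := fun μ => Tpol_vVal (r := r) hγ hPcont hP0 hPsum μ νk
  set v := vVal γ r P μk νk with hv
  -- the deviation follows `μ` at `s` and `μk` elsewhere
  set μt := Function.update μk s (μ s) with hμt
  have hs : v s < Tpol γ r P μt νk v s := by
    rwa [Tpol_congr νk v (show μt s = μ s by simp [hμt])]
  have hge : ∀ t, v t ≤ Tpol γ r P μt νk v t := by
    intro t
    by_cases hts : t = s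
    · rw [hts]; exact hs.le
    · rw [Tpol_congr νk v (show μt t = μk t by simp [hμt, hts]), hfix μk t]
  set w := vVal γ r P μt νk with hw
  have hd := nonneg_of_ge_discounted (Pmat_nonneg hP0 μt νk) (Pmat_sum hPcont hPsum μt νk) hγ
    (d := w - v) fun t => by
      have h1 := hfix μt t
      have h2 := hge t
      simp only [← hw, Tpol] at h1 h2
      rw [Matrix.mulVec_sub, Pi.sub_apply, Pi.sub_apply]
      linarith
  have hwv : w = v := funext fun t => le_antisymm (hμk μt t) (sub_nonneg.1 (hd t))
  have h1 := hfix μt s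
  rw [← hw, hwv] at h1
  exact hs.ne' h1

lemma Tpol_mix (hr : ∀ s, Continuous fun p : A × B => r s p.1 p.2)
    (hPcont : ∀ s s', Continuous fun p : A × B => P s s' p.1 p.2)
    {η : ℝ} (hη : η ∈ Set.Ioc (0:ℝ) 1) (μ : S → ProbabilityMeasure A)
    {νk ν' νmix : S → ProbabilityMeasure B}
    (hmix : ∀ s : S, (νmix s : Measure B)
        = ENNReal.ofReal (1 - η) • (νk s : Measure B) + ENNReal.ofReal η • (ν' s : Measure B))
    (v : S → ℝ) (s : S) :
    Tpol γ r P μ νmix v s = (1 - η) * Tpol γ r P μ νk v s + η * Tpol γ r P μ ν' v s := by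
  have h1 : 0 ≤ 1 - η := sub_nonneg.2 hη.2
  simp only [Tpol, rPol, Pmat, Matrix.mulVec, dotProduct, Matrix.of_apply, hmix]
  rw [integral_mix (hr s) _ _ _ h1 hη.1.le]
  simp_rw [fun s' => integral_mix (hPcont s s') (μ s : Measure A) (νk s : Measure B)
    (ν' s : Measure B) h1 hη.1.le, add_mul, Finset.sum_add_distrib, mul_assoc,
    ← Finset.mul_sum]
  ring

lemma bddAbove_Tpol (hγ : γ ∈ Set.Ioo (0:ℝ) 1)
    (hr : ∀ s, Continuous fun p : A × B => r s p.1 p.2)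
    (hPcont : ∀ s s', Continuous fun p : A × B => P s s' p.1 p.2)
    (hP0 : ∀ s s' a b, 0 ≤ P s s' a b) (hPsum : ∀ s a b, ∑ s', P s s' a b = 1)
    (ν : S → ProbabilityMeasure B) (v : S → ℝ) (s : S) :
    BddAbove (Set.range fun μ : S → ProbabilityMeasure A => Tpol γ r P μ ν v s) := by
  obtain ⟨C, hC⟩ := exists_abs_integral_le (hr s)
  refine ⟨C + γ * ‖v‖, ?_⟩
  rintro _ ⟨μ, rfl⟩
  exact add_le_add ((le_abs_self _).trans (hC (μ s) (ν s)))
    (mul_le_mul_of_nonneg_left ((le_abs_self _).trans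
      (mulVec_abs_le (Pmat_nonneg hP0 μ ν) (Pmat_sum hPcont hPsum μ ν)
        (fun t => norm_le_pi_norm v t) s)) hγ.1.le)

end Game

theorem stmt9 {S A B : Type*} [Fintype S] [DecidableEq S]
    [MetricSpace A] [CompactSpace A] [Nonempty A] [MeasurableSpace A] [BorelSpace A]
    [MetricSpace B] [CompactSpace B] [Nonempty B] [MeasurableSpace B] [BorelSpace B]
    (γ : ℝ) (hγ : γ ∈ Set.Ioo (0:ℝ) 1)
    (r : S → A → B → ℝ) (hr : ∀ s, Continuous fun p : A × B => r s p.1 p.2)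
    (P : S → S → A → B → ℝ)
    (hPcont : ∀ s s', Continuous fun p : A × B => P s s' p.1 p.2)
    (hP0 : ∀ s s' a b, 0 ≤ P s s' a b) (hP1 : ∀ s s' a b, P s s' a b ≤ 1)
    (hPsum : ∀ s a b, ∑ s', P s s' a b = 1)
    (η : ℝ) (hη : η ∈ Set.Ioc (0:ℝ) 1)
    (μk : S → ProbabilityMeasure A) (νk ν' νmix : S → ProbabilityMeasure B)
    (hμk : ∀ (μ : S → ProbabilityMeasure A) (s : S), vVal γ r P μ νk s ≤ vVal γ r P μk νk s)
    (hν' : ∀ (ν : S → ProbabilityMeasure B) (s : S),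
        (⨆ μ : S → ProbabilityMeasure A, Tpol γ r P μ ν' (vVal γ r P μk νk) s)
          ≤ ⨆ μ : S → ProbabilityMeasure A, Tpol γ r P μ ν (vVal γ r P μk νk) s)
    (hmix : ∀ s : S, (νmix s : Measure B)
        = ENNReal.ofReal (1 - η) • (νk s : Measure B) + ENNReal.ofReal η • (ν' s : Measure B)) :
    ∀ s : S,
      (⨆ μ : S → ProbabilityMeasure A, Tpol γ r P μ νmix (vVal γ r P μk νk) s)
        ≤ vVal γ r P μk νk s := by
  intro s
  haveI : Nonempty (S → ProbabilityMeasure A) := ⟨μk⟩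
  have hk := fun μ => Tpol_le_of_optimal hγ hPcont hP0 hPsum hμk μ s
  refine ciSup_le fun μ => ?_
  have h' : Tpol γ r P μ ν' (vVal γ r P μk νk) s ≤ vVal γ r P μk νk s :=
    ((le_ciSup (bddAbove_Tpol hγ hr hPcont hP0 hPsum ν' _ s) μ).trans (hν' νk s)).trans
      (ciSup_le hk)
  rw [Tpol_mix hr hPcont hη μ hmix]
  calc (1 - η) * Tpol γ r P μ νk (vVal γ r P μk νk) s + η * Tpol γ r P μ ν' (vVal γ r P μk νk) s
      ≤ (1 - η) * vVal γ r P μk νk s + η * vVal γ r P μk νk s :=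
        add_le_add (mul_le_mul_of_nonneg_left (hk μ) (sub_nonneg.2 hη.2))
          (mul_le_mul_of_nonneg_left h' hη.1.le)
    _ = vVal γ r P μk νk s := by ring
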